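/- For every integer N ≥ 2, every real p > 1 and all positive reals f, F with f^p ≤ F, the infimum of ∫_{[0,1)} (M_N φ)^p dμ over all nonnegative measurable φ on [0,1) with ∫_{[0,1)} φ dμ = f and ∫_{[0,1)} φ^p dμ = F equals f^p + ((N^p − 1)/(N^p − N))·(F − f^p). -/

import Mathlib

open MeasureTheory Set Filter

/-- The `N`-adic interval `[k/N^m, (k+1)/N^m)` at level `m`. -/
def adicItv (N m k : ℕ) : Set ℝ :=
  Set.Ico ((k : ℝ) / (N : ℝ) ^ m) (((k : ℝ) + 1) / (N : ℝ) ^ m)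

/-- The average `(1/μ(I)) ∫_I |φ| dμ` of `φ` over the `N`-adic interval at level `m`, index `k`
(its measure is `N^{-m}`). -/
noncomputable def adicAvg (N : ℕ) (φ : ℝ → ℝ) (m k : ℕ) : ℝ :=
  (N : ℝ) ^ m * ∫ y in adicItv N m k, |φ y|

/-- The `N`-adic maximal operator on `[0,1)`:
`M_N φ(x) = sup { (1/μ(I)) ∫_I |φ| dμ : x ∈ I, I an N-adic interval }`. -/
noncomputable def adicMax (N : ℕ) (φ : ℝ → ℝ) (x : ℝ) : ℝ :=
  sSup {r : ℝ | ∃ m k : ℕ, k < N ^ m ∧ x ∈ adicItv N m k ∧ r = adicAvg N φ m k}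

theorem nm_shell_int (N : ℕ) (hN : 2 ≤ N) (g : ℝ → ℝ) (c P : ℕ → ℝ) (hc : ∀ i, 0 ≤ c i)
    (hg : ∀ i, ∀ x ∈ Ico (((N:ℝ)^(i+1))⁻¹) (((N:ℝ)^i)⁻¹), g x = c i)
    (hP : ∀ i, c i * (((N:ℝ)^i)⁻¹ - ((N:ℝ)^(i+1))⁻¹) = P i - P (i+1))
    (hlim : Tendsto P atTop (nhds 0)) (m : ℕ) :
    IntegrableOn g (Ico 0 (((N:ℝ)^m)⁻¹)) ∧ ∫ x in Ico 0 (((N:ℝ)^m)⁻¹), g x = P m := by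
  have hN1 : (1:ℝ) < N := by exact_mod_cast (by omega : 1 < N)
  have hN0 : (0:ℝ) < N := by linarith
  have hanti : Antitone (fun n : ℕ => ((N:ℝ)^n)⁻¹) := by
    intro a b hab
    have : (N:ℝ)^a ≤ (N:ℝ)^b := pow_le_pow_right₀ hN1.le hab
    have h0 : 0 < (N:ℝ)^a := by positivity
    simp only
    gcongr
  have hr0 : Tendsto (fun n : ℕ => ((N:ℝ)^n)⁻¹) atTop (nhds 0) :=
    (tendsto_pow_atTop_atTop_of_one_lt hN1).inv_tendsto_atTop
  have hr0' : Tendsto (fun n : ℕ => ((N:ℝ)^(m+n))⁻¹) atTop (nhds 0) := by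
    have := (tendsto_add_atTop_iff_nat m).2 hr0
    simpa [add_comm] using this
  have key : ∀ n, IntegrableOn g (Ico (((N:ℝ)^(m+n))⁻¹) (((N:ℝ)^m)⁻¹)) ∧
      ∫ x in Ico (((N:ℝ)^(m+n))⁻¹) (((N:ℝ)^m)⁻¹), g x = P m - P (m+n) := by
    intro n
    induction n with
    | zero => simp
    | succ n ih =>
      have h1 : ((N:ℝ)^(m+(n+1)))⁻¹ ≤ ((N:ℝ)^(m+n))⁻¹ := hanti (by omega)
      have h2 : ((N:ℝ)^(m+n))⁻¹ ≤ ((N:ℝ)^m)⁻¹ := hanti (by omega)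
      rw [← Ico_union_Ico_eq_Ico h1 h2]
      have hi : IntegrableOn g (Ico (((N:ℝ)^(m+(n+1)))⁻¹) (((N:ℝ)^(m+n))⁻¹)) := by
        have : IntegrableOn (fun _ => c (m+n)) (Ico (((N:ℝ)^(m+(n+1)))⁻¹) (((N:ℝ)^(m+n))⁻¹)) :=
          integrableOn_const (by simp)
        exact this.congr_fun (fun x hx => (hg (m+n) x hx).symm) measurableSet_Ico
      refine ⟨hi.union ih.1, ?_⟩
      rw [setIntegral_union (Ico_disjoint_Ico_same) measurableSet_Ico hi ih.1, ih.2, ← add_assoc,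
        setIntegral_congr_fun measurableSet_Ico (fun x hx => hg (m+n) x hx)]
      rw [← add_assoc] at h1
      have := hP (m+n)
      simp only [setIntegral_const, smul_eq_mul, Measure.real, Real.volume_Ico]
      rw [ENNReal.toReal_ofReal (by linarith)]
      linarith
  have cov : AECover (volume.restrict (Ico 0 (((N:ℝ)^m)⁻¹))) atTop
      (fun n : ℕ => Ico (((N:ℝ)^(m+n))⁻¹) (((N:ℝ)^m)⁻¹)) := by
    refine ⟨?_, fun n => measurableSet_Ico⟩
    rw [ae_restrict_iff' measurableSet_Ico]
    have : ∀ᵐ x : ℝ, x ≠ 0 := by simp [ae_iff]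
    filter_upwards [this] with x hx0 hx
    have hx1 : 0 < x := lt_of_le_of_ne hx.1 (Ne.symm hx0)
    filter_upwards [hr0'.eventually (gt_mem_nhds hx1)] with n hn
    exact ⟨hn.le, hx.2⟩
  have hres : ∀ n, (volume.restrict (Ico 0 (((N:ℝ)^m)⁻¹))).restrict
      (Ico (((N:ℝ)^(m+n))⁻¹) (((N:ℝ)^m)⁻¹)) = volume.restrict
      (Ico (((N:ℝ)^(m+n))⁻¹) (((N:ℝ)^m)⁻¹)) := by
    intro n
    rw [Measure.restrict_restrict measurableSet_Ico, inter_eq_left.2]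
    exact Ico_subset_Ico_left (by positivity)
  have hnn : ∀ᵐ x ∂(volume.restrict (Ico 0 (((N:ℝ)^m)⁻¹))), 0 ≤ g x := by
    rw [ae_restrict_iff' measurableSet_Ico]
    have : ∀ᵐ x : ℝ, x ≠ 0 := by simp [ae_iff]
    filter_upwards [this] with x hx0 hx
    have hx1 : 0 < x := lt_of_le_of_ne hx.1 (Ne.symm hx0)
    have hx2 : x < 1 := lt_of_lt_of_le hx.2 (by simpa using hanti (Nat.zero_le m))
    obtain ⟨n, hn1, hn2⟩ := exists_nat_pow_near_of_lt_one hx1 hx2.le (y := (N:ℝ)⁻¹)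
      (by positivity) (inv_lt_one_of_one_lt₀ hN1)
    rcases hn2.lt_or_eq with h | h
    · rw [hg n x ⟨by rw [← inv_pow]; exact hn1.le, by rw [← inv_pow]; exact h⟩]; exact hc n
    · cases n with
      | zero => simp at h; linarith
      | succ n =>
        rw [hg n x ⟨by rw [← inv_pow]; exact h.ge, ?_⟩]; exact hc n
        rw [h, ← inv_pow]
        exact pow_lt_pow_right_of_lt_one₀ (by positivity) (inv_lt_one_of_one_lt₀ hN1) (by omega)
  have ht : Tendsto (fun n => ∫ x in Ico (((N:ℝ)^(m+n))⁻¹) (((N:ℝ)^m)⁻¹), g x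
      ∂(volume.restrict (Ico 0 (((N:ℝ)^m)⁻¹)))) atTop (nhds (P m)) := by
    simp only [hres, (key _).2]
    have := (tendsto_add_atTop_iff_nat m).2 hlim
    simpa [add_comm] using this.const_sub (P m)
  have hI : ∀ n, IntegrableOn g (Ico (((N:ℝ)^(m+n))⁻¹) (((N:ℝ)^m)⁻¹))
      (volume.restrict (Ico 0 (((N:ℝ)^m)⁻¹))) := by
    intro n
    rw [IntegrableOn, hres]
    exact (key n).1
  have hint : IntegrableOn g (Ico 0 (((N:ℝ)^m)⁻¹)) :=
    cov.integrable_of_integral_tendsto_of_nonneg_ae _ hI hnn ht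
  exact ⟨hint, cov.integral_eq_of_tendsto _ hint ht⟩

/-- greedy dynamics -/
noncomputable def nmSt (N : ℕ) (p f R : ℝ) : ℕ → ℝ × ℝ
  | 0 => (f, R)
  | n+1 => if (N:ℝ)^(p-1) ≤ (nmSt N p f R n).2 then
      ((N:ℝ) * (nmSt N p f R n).1, (nmSt N p f R n).2 / (N:ℝ)^(p-1))
    else ((nmSt N p f R n).1, 1 + N * ((nmSt N p f R n).2 - 1))

theorem nm_dyn (N : ℕ) (hN : 2 ≤ N) (p f R0 : ℝ) (hp : 1 < p) (hf : 0 < f) (hR : 1 ≤ R0) :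
    ∃ x a R : ℕ → ℝ, x 0 = f ∧ R 0 = R0 ∧ (∀ n, 0 ≤ a n) ∧ (∀ n, a n ≤ x n) ∧ Monotone x ∧
      (∀ i, a i * (((N:ℝ)^i)⁻¹ - ((N:ℝ)^(i+1))⁻¹) =
        ((N:ℝ)^i)⁻¹ * x i - ((N:ℝ)^(i+1))⁻¹ * x (i+1)) ∧
      (∀ i, a i ^ p * (((N:ℝ)^i)⁻¹ - ((N:ℝ)^(i+1))⁻¹) =
        ((N:ℝ)^i)⁻¹ * x i ^ p * R i - ((N:ℝ)^(i+1))⁻¹ * x (i+1) ^ p * R (i+1)) ∧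
      (∀ i, x i ^ p * (((N:ℝ)^i)⁻¹ - ((N:ℝ)^(i+1))⁻¹) =
        ((N:ℝ)^i)⁻¹ * x i ^ p * (1 + (((N : ℝ) ^ p - 1) / ((N : ℝ) ^ p - N)) * (R i - 1))
        - ((N:ℝ)^(i+1))⁻¹ * x (i+1) ^ p *
          (1 + (((N : ℝ) ^ p - 1) / ((N : ℝ) ^ p - N)) * (R (i+1) - 1))) ∧
      Tendsto (fun i => ((N:ℝ)^i)⁻¹ * x i) atTop (nhds 0) ∧
      Tendsto (fun i => ((N:ℝ)^i)⁻¹ * x i ^ p * R i) atTop (nhds 0) ∧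
      Tendsto (fun i => ((N:ℝ)^i)⁻¹ * x i ^ p *
        (1 + (((N : ℝ) ^ p - 1) / ((N : ℝ) ^ p - N)) * (R i - 1))) atTop (nhds 0) := by
  have hN1 : (1:ℝ) < N := by exact_mod_cast (by omega : 1 < N)
  have hN0 : (0:ℝ) < N := by linarith
  obtain ⟨q, hq⟩ : ∃ q, q = (N:ℝ)^(p-1) := ⟨_, rfl⟩
  have hq1 : 1 < q := by rw [hq]; exact Real.one_lt_rpow hN1 (by linarith)
  have hNp : (N:ℝ)^p = N * q := by
    rw [hq, Real.rpow_sub_one hN0.ne']; field_simp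
  obtain ⟨x, hx⟩ : ∃ x : ℕ → ℝ, x = fun n => (nmSt N p f R0 n).1 := ⟨_, rfl⟩
  obtain ⟨R, hRd⟩ : ∃ x : ℕ → ℝ, x = fun n => (nmSt N p f R0 n).2 := ⟨_, rfl⟩
  have hstep : ∀ n, (q ≤ R n ∧ x (n+1) = N * x n ∧ R (n+1) = R n / q) ∨
      (R n < q ∧ x (n+1) = x n ∧ R (n+1) = 1 + N * (R n - 1)) := by
    intro n
    by_cases h : q ≤ R n
    · left
      refine ⟨h, ?_⟩
      subst hx hRd hq
      simp only at h ⊢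
      rw [nmSt, if_pos h]; simp
    · right
      refine ⟨not_le.1 h, ?_⟩
      subst hx hRd hq
      simp only at h ⊢
      rw [nmSt, if_neg h]; simp
  have hx00 : x 0 = f := by rw [hx]; rfl
  have hR00 : R 0 = R0 := by rw [hRd]; rfl
  clear hx hRd
  have hxf : ∀ n, f ≤ x n := by
    intro n
    induction n with
    | zero => exact hx00.ge
    | succ n ih =>
      rcases hstep n with ⟨_, h, _⟩ | ⟨_, h, _⟩ <;> rw [h]
      · nlinarith
      · exact ih
  have hx0 : ∀ n, 0 < x n := fun n => hf.trans_le (hxf n)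
  have hR1 : ∀ n, 1 ≤ R n := by
    intro n
    induction n with
    | zero => rw [hR00]; exact hR
    | succ n ih =>
      rcases hstep n with ⟨h1, _, h⟩ | ⟨_, _, h⟩ <;> rw [h]
      · rw [le_div_iff₀ (by linarith)]; linarith
      · nlinarith
  obtain ⟨C, hC⟩ : ∃ C, C = max R0 (1 + N * (q-1)) := ⟨_, rfl⟩
  have hRC : ∀ n, R n ≤ C := by
    intro n
    induction n with
    | zero => rw [hC, hR00]; exact le_max_left _ _
    | succ n ih =>
      rcases hstep n with ⟨h1, _, h⟩ | ⟨h1, _, h⟩ <;> rw [h]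
      · refine le_trans ?_ ih
        rw [div_le_iff₀ (by linarith)]; nlinarith [hR1 n]
      · rw [hC]; refine le_trans ?_ (le_max_right _ _); nlinarith
  have hC1 : 1 ≤ C := (hR1 0).trans (hRC 0)
  obtain ⟨K, hK⟩ : ∃ K, K = (((N : ℝ) ^ p - 1) / ((N : ℝ) ^ p - N)) := ⟨_, rfl⟩
  rw [← hK]
  rw [hNp] at hK
  have hden : 0 < N * q - N := by nlinarith
  have hKe : K * (N * q - N) = N * q - 1 := by rw [hK, div_mul_cancel₀ _ hden.ne']
  have hK1 : 1 ≤ K := by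
    rw [hK, le_div_iff₀ hden]; linarith
  obtain ⟨a, ha⟩ : ∃ a : ℕ → ℝ, a = fun n => if q ≤ R n then 0 else x n := ⟨_, rfl⟩
  have hpow : ∀ n, ((N:ℝ)^(n+1))⁻¹ = ((N:ℝ)^n)⁻¹ / N := by
    intro n; rw [pow_succ, mul_inv]; rfl
  have hT : (∀ i, a i ^ p * (((N:ℝ)^i)⁻¹ - ((N:ℝ)^(i+1))⁻¹) =
        ((N:ℝ)^i)⁻¹ * x i ^ p * R i - ((N:ℝ)^(i+1))⁻¹ * x (i+1) ^ p * R (i+1)) := by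
    intro i
    rw [hpow]
    rcases hstep i with ⟨h1, h2, h3⟩ | ⟨h1, h2, h3⟩ <;> rw [h2, h3, ha]
    · simp only [if_pos h1]
      rw [Real.zero_rpow (by linarith), Real.mul_rpow hN0.le (hx0 i).le, hNp]
      field_simp; ring
    · simp only [if_neg (not_le.2 h1)]
      field_simp; ring
  have hTlim : Tendsto (fun i => ((N:ℝ)^i)⁻¹ * x i ^ p * R i) atTop (nhds 0) := by
    obtain ⟨T, hTd⟩ : ∃ T : ℕ → ℝ, T = (fun i => ((N:ℝ)^i)⁻¹ * x i ^ p * R i) := ⟨_, rfl⟩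
    rw [← hTd]
    have hTi : ∀ i, T i = ((N:ℝ)^i)⁻¹ * x i ^ p * R i := fun i => by rw [hTd]
    have hxp : ∀ i, 0 < x i ^ p := fun i => Real.rpow_pos_of_pos (hx0 i) p
    have hT0 : ∀ i, 0 ≤ T i := by
      intro i; rw [hTi]; have := hR1 i; have := hxp i; positivity
    have hdiff : ∀ i, T i - T (i+1) = a i ^ p * (((N:ℝ)^i)⁻¹ - ((N:ℝ)^(i+1))⁻¹) := by
      intro i; rw [hT, hTi, hTi]
    have ha0 : ∀ i, 0 ≤ a i := by
      intro i; rw [ha]; simp only; split_ifs; exact le_rfl; exact (hx0 i).le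
    have hanti : Antitone T := by
      refine antitone_nat_of_succ_le fun i => ?_
      have := hdiff i
      have h2 : 0 ≤ a i ^ p * (((N:ℝ)^i)⁻¹ - ((N:ℝ)^(i+1))⁻¹) := by
        refine mul_nonneg (Real.rpow_nonneg (ha0 i) p) ?_
        rw [hpow]
        have : ((N:ℝ)^i)⁻¹ / N ≤ ((N:ℝ)^i)⁻¹ := div_le_self (by positivity) hN1.le
        linarith
      linarith
    have hL := tendsto_atTop_ciInf hanti ⟨0, by rintro _ ⟨i, rfl⟩; exact hT0 i⟩
    obtain ⟨L, hLd⟩ : ∃ L, L = ⨅ i, T i := ⟨_, rfl⟩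
    rw [← hLd] at hL
    have hL0 : 0 ≤ L := ge_of_tendsto' hL hT0
    have hLT : ∀ i, L ≤ T i := fun i => hanti.le_of_tendsto hL i
    rcases hL0.eq_or_lt with h | h
    · rw [h]; exact hL
    exfalso
    have hd : Tendsto (fun i => T i - T (i+1)) atTop (nhds 0) := by
      simpa using hL.sub ((tendsto_add_atTop_iff_nat 1).2 hL)
    have hpos : 0 < L / C * (1 - 1/N) := by
      have : 1 / (N:ℝ) < 1 := by rw [div_lt_one hN0]; exact hN1
      have : 0 < 1 - 1 / (N:ℝ) := by linarith
      positivity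
    obtain ⟨n0, hn0⟩ := eventually_atTop.1 (hd.eventually (gt_mem_nhds hpos))
    have hj : ∀ n ≥ n0, R (n+1) = R n / q := by
      intro n hn
      rcases hstep n with ⟨h1, h2, h3⟩ | ⟨h1, h2, h3⟩
      · exact h3
      · exfalso
        have h4 := hn0 n hn
        rw [hdiff, ha] at h4
        simp only [if_neg (not_le.2 h1)] at h4
        have h5 : L / C ≤ ((N:ℝ)^n)⁻¹ * x n ^ p := by
          rw [div_le_iff₀ (by linarith)]
          refine (hLT n).trans ?_
          rw [hTi]
          have := hRC n
          have := hxp n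
          gcongr
        rw [hpow] at h4
        have h6 : (L / C) * (1 - 1/N) ≤ (((N:ℝ)^n)⁻¹ * x n ^ p) * (1 - 1/N) := by
          refine mul_le_mul_of_nonneg_right h5 ?_
          have : 1 / (N:ℝ) < 1 := by rw [div_lt_one hN0]; exact hN1
          linarith
        have h7 : x n ^ p * (((N:ℝ)^n)⁻¹ - ((N:ℝ)^n)⁻¹ / N) =
          (((N:ℝ)^n)⁻¹ * x n ^ p) * (1 - 1/N) := by ring
        linarith
    have hj2 : ∀ k, R (n0 + k) = R n0 / q ^ k := by
      intro k
      induction k with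
      | zero => simp
      | succ k ih => rw [← add_assoc, hj _ (by omega), ih, pow_succ]; field_simp
    obtain ⟨k, hk⟩ := pow_unbounded_of_one_lt (R n0) hq1
    have := hR1 (n0 + k)
    rw [hj2, le_div_iff₀ (by positivity)] at this
    linarith
  refine ⟨x, a, R, hx00, hR00, ?_, ?_, ?_, ?_, hT, ?_, ?_, hTlim, ?_⟩
  · intro i; rw [ha]; simp only; split_ifs; exact le_rfl; exact (hx0 i).le
  · intro i; rw [ha]; simp only; split_ifs; exact (hx0 i).le; exact le_rfl
  · refine monotone_nat_of_le_succ fun n => ?_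
    rcases hstep n with ⟨_, h, _⟩ | ⟨_, h, _⟩ <;> rw [h]
    nlinarith [hx0 n]
  · intro i
    rw [hpow]
    rcases hstep i with ⟨h1, h2, h3⟩ | ⟨h1, h2, h3⟩ <;> rw [h2, ha]
    · simp only [if_pos h1]
      field_simp; ring
    · simp only [if_neg (not_le.2 h1)]
      ring
  · intro i
    rw [hpow]
    rcases hstep i with ⟨h1, h2, h3⟩ | ⟨h1, h2, h3⟩ <;> rw [h2, h3]
    · rw [Real.mul_rpow hN0.le (hx0 i).le, hNp]
      have e : (1 - 1/(N:ℝ)) = (1 + K * (R i - 1)) - q * (1 + K * (R i / q - 1)) := by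
        field_simp
        linear_combination -hKe
      have : x i ^ p * (((N:ℝ)^i)⁻¹ - ((N:ℝ)^i)⁻¹ / N) =
        ((N:ℝ)^i)⁻¹ * x i ^ p * (1 - 1/N) := by ring
      rw [this, e]
      field_simp
    · field_simp; ring
  · refine squeeze_zero (g := fun i => (((N:ℝ)^i)⁻¹ * x i ^ p * R i) * (f^(p-1))⁻¹)
      (fun i => ?_) (fun i => ?_) (by simpa using hTlim.mul_const _)
    · have := hx0 i; positivity
    · have h1 : f^(p-1) ≤ x i ^(p-1) := Real.rpow_le_rpow hf.le (hxf i) (by linarith)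
      have h2 : x i ^ p = x i ^ (p-1) * x i := by
        rw [Real.rpow_sub_one (hx0 i).ne']; have := hx0 i; field_simp
      have h3 : 0 < f^(p-1) := Real.rpow_pos_of_pos hf _
      rw [← div_eq_mul_inv, le_div_iff₀ h3, h2]
      have := hx0 i
      have := hR1 i
      have h4 : f^(p-1) ≤ x i^(p-1) * R i := by nlinarith
      calc ((N:ℝ)^i)⁻¹ * x i * f^(p-1) ≤ ((N:ℝ)^i)⁻¹ * x i * (x i^(p-1) * R i) := by gcongr
        _ = _ := by ring
  · refine squeeze_zero (g := fun i => (((N:ℝ)^i)⁻¹ * x i ^ p * R i) * K)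
      (fun i => ?_) (fun i => ?_) (by simpa using hTlim.mul_const _)
    · have := hx0 i
      have := hR1 i
      have : 0 ≤ K * (R i - 1) := mul_nonneg (by linarith) (by linarith)
      positivity
    · rw [mul_assoc _ (R i)]
      have := hx0 i
      gcongr
      nlinarith

theorem nm_attain (N : ℕ) (hN : 2 ≤ N) (p f F : ℝ) (hp : 1 < p)
    (hf : 0 < f) (hfF : f ^ p ≤ F) :
    ∃ φ : ℝ → ℝ, Measurable φ ∧ (∀ x ∈ Set.Ico (0:ℝ) 1, 0 ≤ φ x) ∧
        (∫ x in Set.Ico (0:ℝ) 1, φ x) = f ∧ (∫ x in Set.Ico (0:ℝ) 1, φ x ^ p) = F ∧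
        f ^ p + (((N : ℝ) ^ p - 1) / ((N : ℝ) ^ p - N)) * (F - f ^ p)
          = ∫ x in Set.Ico (0:ℝ) 1, adicMax N φ x ^ p := by
  have hN1 : (1:ℝ) < N := by exact_mod_cast (by omega : 1 < N)
  have hN0 : (0:ℝ) < N := by linarith
  have hfp : 0 < f ^ p := Real.rpow_pos_of_pos hf p
  obtain ⟨x, a, R, hx0, hR0, ha0, hax, hmono, hU, hT, hW, hUl, hTl, hWl⟩ :=
    nm_dyn N hN p f (F / f ^ p) hp hf (by rw [le_div_iff₀ hfp]; linarith)
  have hx00 : ∀ i, 0 ≤ x i := fun i => (ha0 i).trans (hax i)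
  obtain ⟨φ, hφ⟩ : ∃ φ : ℝ → ℝ, φ = fun y => (fun n : ℕ => a (n-1)) ⌈-Real.logb N y⌉₊ := ⟨_, rfl⟩
  have hφm : Measurable φ := by
    rw [hφ]
    have h1 : Measurable (fun n : ℕ => a (n-1)) := measurable_from_top
    refine h1.comp (Nat.measurable_ceil.comp ?_)
    unfold Real.logb
    fun_prop
  have hφ0 : ∀ y, 0 ≤ φ y := by intro y; rw [hφ]; exact ha0 _
  have hsh : ∀ i, ∀ y ∈ Ico (((N:ℝ)^(i+1))⁻¹) (((N:ℝ)^i)⁻¹), φ y = a i := by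
    intro i y hy
    have hy0 : 0 < y := lt_of_lt_of_le (by positivity) hy.1
    have hc : ⌈-Real.logb N y⌉₊ = i + 1 := by
      rw [Nat.ceil_eq_iff (by omega)]
      constructor
      · rw [lt_neg, Real.logb_lt_iff_lt_rpow hN1 hy0, Real.rpow_neg hN0.le, Real.rpow_natCast]
        simpa using hy.2
      · rw [neg_le, Real.le_logb_iff_rpow_le hN1 hy0, Real.rpow_neg hN0.le, Real.rpow_natCast]
        exact hy.1
    rw [hφ]; simp only [hc]; rfl
  have hshell : ∀ y : ℝ, 0 < y → y < 1 → ∃ i : ℕ, y ∈ Ico (((N:ℝ)^(i+1))⁻¹) (((N:ℝ)^i)⁻¹) := by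
    intro y hy0 hy1
    obtain ⟨n, hn⟩ : ∃ n : ℕ, ((N:ℝ)^n)⁻¹ ≤ y := by
      obtain ⟨n, hn⟩ := exists_pow_lt_of_lt_one hy0 (inv_lt_one_of_one_lt₀ hN1)
      exact ⟨n, by rw [← inv_pow]; exact hn.le⟩
    classical
    have hex : ∃ n : ℕ, ((N:ℝ)^n)⁻¹ ≤ y := ⟨n, hn⟩
    obtain ⟨i, hi⟩ : ∃ i, Nat.find hex = i + 1 := by
      refine Nat.exists_eq_succ_of_ne_zero fun h0 => ?_
      have := Nat.find_spec hex
      rw [h0] at this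
      simp at this; linarith
    refine ⟨i, ?_, ?_⟩
    · rw [← hi]; exact Nat.find_spec hex
    · exact not_le.1 (Nat.find_min hex (by omega : i < Nat.find hex))
  have hrlt : ∀ i j : ℕ, ((N:ℝ)^i)⁻¹ < ((N:ℝ)^j)⁻¹ → j < i := by
    intro i j h
    rw [inv_lt_inv₀ (by positivity) (by positivity)] at h
    exact (pow_lt_pow_iff_right₀ hN1).1 h
  have hle : ∀ i : ℕ, ∀ y, ((N:ℝ)^(i+1))⁻¹ ≤ y → y < 1 → φ y ≤ x i := by
    intro i y hy hy1
    obtain ⟨j, hj⟩ := hshell y (lt_of_lt_of_le (by positivity) hy) hy1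
    rw [hsh j y hj]
    refine (hax j).trans (hmono ?_)
    have := hrlt (i+1) j (lt_of_le_of_lt hy hj.2)
    omega
  have habs : ∀ y, |φ y| = φ y := fun y => abs_of_nonneg (hφ0 y)
  have hI := fun m => nm_shell_int N hN φ a (fun i => ((N:ℝ)^i)⁻¹ * x i) ha0 hsh hU hUl m
  have havg0 : ∀ m, adicAvg N φ m 0 = x m := by
    intro m
    unfold adicAvg adicItv
    simp only [habs]
    have := (hI m).2
    simp only [Nat.cast_zero, zero_div, zero_add, one_div]
    rw [this]
    field_simp
  have hmax : ∀ i, ∀ y ∈ Ico (((N:ℝ)^(i+1))⁻¹) (((N:ℝ)^i)⁻¹), adicMax N φ y = x i := by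
    intro i y hy
    have hy0 : 0 < y := lt_of_lt_of_le (by positivity) hy.1
    unfold adicMax
    refine IsGreatest.csSup_eq ⟨⟨i, 0, by positivity, ?_, (havg0 i).symm⟩, ?_⟩
    · unfold adicItv
      simp only [Nat.cast_zero, zero_div, zero_add, one_div]
      exact ⟨hy0.le, hy.2⟩
    · rintro r ⟨m, k, hk, hyk, rfl⟩
      rcases Nat.eq_zero_or_pos k with h0 | hkpos
      · subst h0
        rw [havg0]
        refine hmono ?_
        unfold adicItv at hyk
        simp only [Nat.cast_zero, zero_div, zero_add, one_div] at hyk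
        have := hrlt (i+1) m (lt_of_le_of_lt hy.1 hyk.2)
        omega
      · unfold adicItv at hyk
        have hNm : 0 < (N:ℝ)^m := by positivity
        have hk1 : (1:ℝ) ≤ k := by exact_mod_cast hkpos
        have him : i < m := by
          refine hrlt m i (lt_of_le_of_lt (le_trans ?_ hyk.1) hy.2)
          rw [inv_eq_one_div]; gcongr
        obtain ⟨d, rfl⟩ : ∃ d, m = (i+1) + d := ⟨m - (i+1), by omega⟩
        have hkd : N^d ≤ k := by
          have h1 := lt_of_le_of_lt hy.1 hyk.2
          rw [lt_div_iff₀ hNm, pow_add _ (i+1) d, ← mul_assoc, inv_mul_cancel₀ (by positivity), one_mul] at h1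
          have : N^d < k + 1 := by exact_mod_cast h1
          omega
        have hlow : ((N:ℝ)^(i+1))⁻¹ ≤ (k:ℝ) / (N:ℝ)^(i+1+d) := by
          rw [le_div_iff₀ hNm, pow_add _ (i+1) d, ← mul_assoc, inv_mul_cancel₀ (by positivity), one_mul]
          exact_mod_cast hkd
        have hup : ((k:ℝ)+1) / (N:ℝ)^(i+1+d) ≤ 1 := by
          rw [div_le_one hNm]
          exact_mod_cast hk
        unfold adicAvg adicItv
        simp only [habs]
        have hint : IntegrableOn φ (Ico ((k:ℝ) / (N:ℝ)^(i+1+d)) (((k:ℝ)+1) / (N:ℝ)^(i+1+d))) := by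
          refine (hI 0).1.mono_set ?_
          refine Ico_subset_Ico (by positivity) (by simpa using hup)
        have h2 : ∫ y in Ico ((k:ℝ) / (N:ℝ)^(i+1+d)) (((k:ℝ)+1) / (N:ℝ)^(i+1+d)), φ y ≤
            ∫ y in Ico ((k:ℝ) / (N:ℝ)^(i+1+d)) (((k:ℝ)+1) / (N:ℝ)^(i+1+d)), x i := by
          refine setIntegral_mono_on hint (integrableOn_const (by simp)) measurableSet_Ico ?_
          intro z hz
          exact hle i z (hlow.trans hz.1) (lt_of_lt_of_le hz.2 hup)
        simp only [setIntegral_const, smul_eq_mul, Measure.real, Real.volume_Ico] at h2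
        have h3 : ((k:ℝ)+1) / (N:ℝ)^(i+1+d) - (k:ℝ) / (N:ℝ)^(i+1+d) = ((N:ℝ)^(i+1+d))⁻¹ := by
          field_simp; ring
        rw [h3, ENNReal.toReal_ofReal (by positivity)] at h2
        calc _ ≤ (N:ℝ)^(i+1+d) * (((N:ℝ)^(i+1+d))⁻¹ * x i) := by gcongr
          _ = x i := by field_simp
  refine ⟨φ, hφm, fun y _ => hφ0 y, ?_, ?_, ?_⟩
  · have := (hI 0).2
    simpa [hx0] using this
  · have := (nm_shell_int N hN (fun y => φ y ^ p) (fun i => a i ^ p) _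
      (fun i => Real.rpow_nonneg (ha0 i) p) (fun i y hy => by simp only [hsh i y hy]) hT hTl 0).2
    simp only [pow_zero, inv_one, one_mul, hx0, hR0] at this
    rw [this]; field_simp
  · have := (nm_shell_int N hN (fun y => adicMax N φ y ^ p) (fun i => x i ^ p) _
      (fun i => Real.rpow_nonneg (hx00 i) p) (fun i y hy => by simp only [hmax i y hy]) hW hWl 0).2
    simp only [pow_zero, inv_one, one_mul, hx0, hR0] at this
    rw [this]
    generalize (((N : ℝ) ^ p - 1) / ((N : ℝ) ^ p - N)) = K
    field_simp

theorem nm_mem (N : ℕ) (hN : 2 ≤ N) (n k : ℕ) (x : ℝ) (hx : 0 ≤ x) :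
    x ∈ adicItv N n k ↔ ⌊x * (N:ℝ)^n⌋₊ = k := by
  have hN0 : (0:ℝ) < (N:ℝ)^n := by
    have : 0 < N := by omega
    positivity
  rw [Nat.floor_eq_iff (by positivity), adicItv, mem_Ico, div_le_iff₀ hN0, lt_div_iff₀ hN0]

theorem nm_idx_lt (N : ℕ) (hN : 2 ≤ N) (n : ℕ) (x : ℝ) (hx : x ∈ Ico (0:ℝ) 1) :
    ⌊x * (N:ℝ)^n⌋₊ < N ^ n := by
  have hN0 : (0:ℝ) < (N:ℝ)^n := by
    have : 0 < N := by omega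
    positivity
  rw [Nat.floor_lt (mul_nonneg hx.1 hN0.le)]
  push_cast
  nlinarith [hx.2]

theorem nm_idx_succ (N : ℕ) (hN : 2 ≤ N) (n : ℕ) (x : ℝ) :
    ⌊x * (N:ℝ)^(n+1)⌋₊ / N = ⌊x * (N:ℝ)^n⌋₊ := by
  have hN0 : (0:ℝ) < N := by exact_mod_cast (by omega : 0 < N)
  rw [← Nat.floor_div_natCast, pow_succ]
  congr 1
  field_simp

theorem nm_meas (N n : ℕ) (g : ℕ → ℝ) : Measurable (fun x : ℝ => g ⌊x * (N:ℝ)^n⌋₊) := by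
  have h1 : Measurable g := measurable_from_top
  exact h1.comp (Nat.measurable_floor.comp (by fun_prop))

theorem nm_int_mul (N : ℕ) (hN : 2 ≤ N) (n : ℕ) (g : ℕ → ℝ) (ψ : ℝ → ℝ)
    (hψ : IntegrableOn ψ (Ico 0 1)) :
    IntegrableOn (fun x => g ⌊x * (N:ℝ)^n⌋₊ * ψ x) (Ico 0 1) := by
  refine Integrable.bdd_mul (c := ∑ k ∈ Finset.range (N^n), |g k|) hψ
    (nm_meas N n g).aestronglyMeasurable ?_
  rw [ae_restrict_iff' measurableSet_Ico]
  refine ae_of_all _ fun x hx => ?_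
  exact Finset.single_le_sum (f := fun k => |g k|) (fun _ _ => abs_nonneg _)
    (Finset.mem_range.2 (nm_idx_lt N hN n x hx))

theorem nm_int_one (N : ℕ) (hN : 2 ≤ N) (n : ℕ) (g : ℕ → ℝ) :
    IntegrableOn (fun x => g ⌊x * (N:ℝ)^n⌋₊) (Ico 0 1) := by
  simpa using nm_int_mul N hN n g (fun _ => 1) (integrableOn_const (by simp))

theorem nm_sub (N : ℕ) (hN : 2 ≤ N) (n k : ℕ) (hk : k < N^n) : adicItv N n k ⊆ Ico 0 1 := by
  have hN0 : (0:ℝ) < (N:ℝ)^n := by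
    have : 0 < N := by omega
    positivity
  unfold adicItv
  refine Ico_subset_Ico (by positivity) ?_
  rw [div_le_one hN0]
  exact_mod_cast hk

theorem nm_lev (N : ℕ) (hN : 2 ≤ N) (n : ℕ) (g : ℕ → ℝ) (ψ : ℝ → ℝ)
    (hψ : IntegrableOn ψ (Ico 0 1)) :
    ∫ x in Ico (0:ℝ) 1, g ⌊x * (N:ℝ)^n⌋₊ * ψ x =
      ∑ k ∈ Finset.range (N^n), g k * ∫ x in adicItv N n k, ψ x := by
  have hI : Ico (0:ℝ) 1 = ⋃ k ∈ Finset.range (N^n), adicItv N n k := by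
    ext x
    simp only [mem_iUnion, Finset.mem_range, exists_prop]
    constructor
    · intro hx
      exact ⟨_, nm_idx_lt N hN n x hx, (nm_mem N hN n _ x hx.1).2 rfl⟩
    · rintro ⟨k, hk, hx⟩
      exact nm_sub N hN n k hk hx
  have hpos : ∀ k < N^n, ∀ x ∈ adicItv N n k, 0 ≤ x := fun k hk x hx => (nm_sub N hN n k hk hx).1
  conv_lhs => rw [hI]
  rw [integral_biUnion_finset]
  · refine Finset.sum_congr rfl fun k hk => ?_
    rw [← integral_const_mul]
    refine setIntegral_congr_fun measurableSet_Ico fun x hx => ?_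
    have hx0 := hpos k (Finset.mem_range.1 hk) x hx
    simp only [(nm_mem N hN n k x hx0).1 hx]
  · intro k _; exact measurableSet_Ico
  · intro i hi j hj hij
    rw [Function.onFun, Set.disjoint_left]
    intro x hx hx'
    have hx0 := hpos i (Finset.mem_range.1 (by simpa using hi)) x hx
    exact hij (((nm_mem N hN n i x hx0).1 hx).symm.trans ((nm_mem N hN n j x hx0).1 hx'))
  · intro k hk
    exact (nm_int_mul N hN n g ψ hψ).mono_set (nm_sub N hN n k (Finset.mem_range.1 hk))

theorem nm_swap (N : ℕ) (hN : 2 ≤ N) (n : ℕ) (g : ℕ → ℝ) (φ : ℝ → ℝ)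
    (hφ : IntegrableOn (fun x => |φ x|) (Ico 0 1)) :
    ∫ x in Ico (0:ℝ) 1, g ⌊x * (N:ℝ)^n⌋₊ * adicAvg N φ n ⌊x * (N:ℝ)^n⌋₊ =
      ∫ x in Ico (0:ℝ) 1, g ⌊x * (N:ℝ)^n⌋₊ * |φ x| := by
  have hN0 : (0:ℝ) < (N:ℝ)^n := by
    have : 0 < N := by omega
    positivity
  rw [nm_lev N hN n g _ hφ]
  have := nm_lev N hN n (fun k => g k * adicAvg N φ n k) (fun _ => 1) (integrableOn_const (by simp))
  simp only [mul_one] at this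
  rw [this]
  refine Finset.sum_congr rfl fun k hk => ?_
  have h3 : ((k:ℝ)+1) / (N:ℝ)^n - (k:ℝ) / (N:ℝ)^n = ((N:ℝ)^n)⁻¹ := by
    field_simp; ring
  have h2 : ∫ x in adicItv N n k, (1:ℝ) = ((N:ℝ)^n)⁻¹ := by
    unfold adicItv
    simp only [setIntegral_const, smul_eq_mul, Measure.real, Real.volume_Ico]
    rw [h3, ENNReal.toReal_ofReal (by positivity), mul_one]
  rw [h2]
  unfold adicAvg
  field_simp

/-- running maximum along the tree -/
noncomputable def nmMax (N : ℕ) (φ : ℝ → ℝ) : ℕ → ℕ → ℝ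
  | 0, k => adicAvg N φ 0 k
  | n+1, k => max (nmMax N φ n (k / N)) (adicAvg N φ (n+1) k)

theorem nm_avg_nonneg (N : ℕ) (φ : ℝ → ℝ) (n k : ℕ) : 0 ≤ adicAvg N φ n k := by
  unfold adicAvg
  exact mul_nonneg (by positivity) (integral_nonneg fun _ => abs_nonneg _)

theorem nm_avg_le_max (N : ℕ) (φ : ℝ → ℝ) (n k : ℕ) : adicAvg N φ n k ≤ nmMax N φ n k := by
  cases n with
  | zero => exact le_rfl
  | succ n => exact le_max_right _ _

theorem nm_avg_child (N : ℕ) (hN : 2 ≤ N) (φ : ℝ → ℝ)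
    (hφ : IntegrableOn (fun x => |φ x|) (Ico 0 1)) (n k : ℕ) (hk : k < N^(n+1)) :
    adicAvg N φ (n+1) k ≤ N * adicAvg N φ n (k/N) := by
  have hk' : k / N < N^n := by
    rw [Nat.div_lt_iff_lt_mul (by omega)]; rwa [pow_succ] at hk
  have hsub : adicItv N (n+1) k ⊆ adicItv N n (k/N) := by
    intro x hx
    have hx0 := (nm_sub N hN _ k hk hx).1
    rw [nm_mem N hN _ _ x hx0] at hx ⊢
    rw [← hx, nm_idx_succ N hN]
  unfold adicAvg
  rw [pow_succ, ← mul_assoc, mul_comm ((N:ℝ)^n) (N:ℝ)]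
  refine mul_le_mul_of_nonneg_left ?_ (by positivity)
  exact setIntegral_mono_set (hφ.mono_set (nm_sub N hN _ _ hk')) (ae_of_all _ fun _ => abs_nonneg _)
    hsub.eventuallyLE

theorem nm_real_lo (N : ℕ) (hN : 2 ≤ N) (p a s : ℝ) (hp : 1 < p) (ha : 0 < a) (hs : s ≤ N * a) :
    a ^ p - (((N : ℝ) ^ p - 1) / ((N : ℝ) ^ p - N)) * (a ^ (p-1) * s) ≤
      max a s ^ p - (((N : ℝ) ^ p - 1) / ((N : ℝ) ^ p - N)) * (max a s ^ (p-1) * s) := by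
  rcases le_total s a with h | h
  · rw [max_eq_left h]
  rw [max_eq_right h]
  have hN1 : (1:ℝ) < N := by exact_mod_cast (by omega : 1 < N)
  have hN0 : (0:ℝ) < N := by linarith
  have hNp : (N:ℝ) < (N:ℝ)^p := by
    simpa using Real.rpow_lt_rpow_of_exponent_lt hN1 hp
  obtain ⟨Q, hQ⟩ : ∃ Q, Q = (N:ℝ)^p := ⟨_, rfl⟩
  obtain ⟨t, ht⟩ : ∃ t, t = s / a := ⟨_, rfl⟩
  have hst : s = t * a := by rw [ht]; field_simp
  have ht1 : 1 ≤ t := by rw [ht, le_div_iff₀ ha]; linarith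
  have htN : t ≤ N := by rw [ht, div_le_iff₀ ha]; linarith
  have hd1 : (0:ℝ) < N - 1 := by linarith
  have hconv := (convexOn_rpow hp.le).2 (mem_Ici.2 (zero_le_one' ℝ)) (mem_Ici.2 hN0.le)
    (div_nonneg (by linarith : (0:ℝ) ≤ N - t) hd1.le)
    (div_nonneg (by linarith : (0:ℝ) ≤ t - 1) hd1.le)
    (by rw [← add_div]; rw [div_eq_one_iff_eq (by linarith)]; ring)
  have hcomb : ((N:ℝ) - t)/(N-1) * 1 + (t-1)/(N-1) * N = t := by
    have : (N:ℝ) - 1 ≠ 0 := by linarith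
    field_simp; ring
  simp only [smul_eq_mul, hcomb, Real.one_rpow] at hconv
  rw [← hQ] at hconv hNp ⊢
  obtain ⟨K, hK⟩ : ∃ K, K = (Q - 1) / (Q - N) := ⟨_, rfl⟩
  rw [← hK]
  have hd : Q - N ≠ 0 := by linarith
  have hd' : (N:ℝ) - 1 ≠ 0 := by linarith
  have hK1 : K - 1 = (N - 1) / (Q - N) := by rw [hK]; field_simp; ring
  have hK0 : 0 ≤ K - 1 := by rw [hK1]; exact div_nonneg (by linarith) (by linarith)
  have hmain : (K - 1) * t^p ≤ K * t - 1 := by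
    calc (K-1) * t^p ≤ (K-1) * (((N:ℝ) - t)/(N-1) * 1 + (t-1)/(N-1) * Q) := by gcongr
      _ = K * t - 1 := by rw [hK]; field_simp; ring
  have ht0 : 0 < t := by linarith
  have hap : a ^ p = a^(p-1) * a := by rw [Real.rpow_sub_one ha.ne']; field_simp
  have htp : t ^ p = t^(p-1) * t := by rw [Real.rpow_sub_one ht0.ne']; field_simp
  rw [hst, Real.mul_rpow ht0.le ha.le, Real.mul_rpow ht0.le ha.le]
  have hap0 : 0 < a ^ p := Real.rpow_pos_of_pos ha p
  have e1 : a ^ (p-1) * (t * a) = a^p * t := by rw [hap]; ring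
  have e2 : t ^ (p-1) * a ^ (p-1) * (t * a) = t^p * a^p := by rw [hap, htp]; ring
  rw [e1, e2]
  nlinarith [mul_le_mul_of_nonneg_left hmain hap0.le]

theorem nm_real_hi (p a s : ℝ) (hp : 1 < p) (ha : 0 < a) :
    max a s ^ p - (p / (p-1)) * (max a s ^ (p-1) * s) ≤ a ^ p - (p / (p-1)) * (a ^ (p-1) * s) := by
  rcases le_total s a with h | h
  · rw [max_eq_left h]
  rw [max_eq_right h]
  obtain ⟨t, ht⟩ : ∃ t, t = s / a := ⟨_, rfl⟩
  have hst : s = t * a := by rw [ht]; field_simp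
  have ht1 : 1 ≤ t := by rw [ht, le_div_iff₀ ha]; linarith
  have hb := one_add_mul_self_le_rpow_one_add (s := t - 1) (by linarith) hp.le
  rw [add_sub_cancel] at hb
  have ht0 : 0 < t := by linarith
  have hap : a ^ p = a^(p-1) * a := by rw [Real.rpow_sub_one ha.ne']; field_simp
  have htp : t ^ p = t^(p-1) * t := by rw [Real.rpow_sub_one ht0.ne']; field_simp
  rw [hst, Real.mul_rpow ht0.le ha.le, Real.mul_rpow ht0.le ha.le]
  have hap0 : 0 < a ^ p := Real.rpow_pos_of_pos ha p
  have e1 : a ^ (p-1) * (t * a) = a^p * t := by rw [hap]; ring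
  have e2 : t ^ (p-1) * a ^ (p-1) * (t * a) = t^p * a^p := by rw [hap, htp]; ring
  rw [e1, e2]
  have hp1 : 0 < p - 1 := by linarith
  have : a^p - p/(p-1) * (a^p * t) - (t^p * a^p - p/(p-1) * (t^p*a^p)) =
    a^p * (t^p - (1 + p * (t-1))) / (p-1) := by field_simp; ring
  have h2 : 0 ≤ a^p * (t^p - (1 + p * (t-1))) / (p-1) :=
    div_nonneg (mul_nonneg hap0.le (by linarith)) hp1.le
  linarith

/-- Lebesgue differentiation along adic intervals -/
theorem nm_diff (N : ℕ) (hN : 2 ≤ N) (φ : ℝ → ℝ)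
    (hφ : IntegrableOn (fun x => |φ x|) (Ico 0 1)) :
    ∀ᵐ x ∂(volume.restrict (Ico (0:ℝ) 1)),
      Tendsto (fun n => adicAvg N φ n ⌊x * (N:ℝ)^n⌋₊) atTop (nhds |φ x|) := by
  have hN1 : (1:ℝ) < N := by exact_mod_cast (by omega : 1 < N)
  have hN0 : (0:ℝ) < N := by linarith
  obtain ⟨ψ, hψ⟩ : ∃ ψ : ℝ → ℝ, ψ = (Ico (0:ℝ) 1).indicator (fun x => |φ x|) := ⟨_, rfl⟩
  have hψi : Integrable ψ := by rw [hψ]; exact (integrable_indicator_iff measurableSet_Ico).2 hφ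
  have h := IsUnifLocDoublingMeasure.ae_tendsto_average (μ := (volume : Measure ℝ))
    hψi.locallyIntegrable 1
  rw [ae_restrict_iff' measurableSet_Ico]
  filter_upwards [h] with x hx hxI
  have h1 := hx (ι := ℕ) (l := atTop)
    (fun n => ((⌊x * (N:ℝ)^n⌋₊ : ℝ) + 1/2) / (N:ℝ)^n) (fun n => (1/2) / (N:ℝ)^n) ?_ ?_
  · have hψx : ψ x = |φ x| := by rw [hψ, indicator_of_mem hxI]
    rw [hψx] at h1
    refine h1.congr fun n => ?_
    have hNn : (0:ℝ) < (N:ℝ)^n := by positivity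
    rw [Real.closedBall_eq_Icc, ← sub_div, ← add_div]
    have e1 : ((⌊x * (N:ℝ)^n⌋₊ : ℝ) + 1/2 - 1/2) = (⌊x * (N:ℝ)^n⌋₊ : ℝ) := by ring
    have e2 : ((⌊x * (N:ℝ)^n⌋₊ : ℝ) + 1/2 + 1/2) = (⌊x * (N:ℝ)^n⌋₊ : ℝ) + 1 := by ring
    rw [e1, e2, setAverage_eq, integral_Icc_eq_integral_Ico]
    simp only [Measure.real, Real.volume_Icc, smul_eq_mul]
    have h3 : ((⌊x * (N:ℝ)^n⌋₊:ℝ)+1) / (N:ℝ)^n - (⌊x * (N:ℝ)^n⌋₊:ℝ) / (N:ℝ)^n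
      = ((N:ℝ)^n)⁻¹ := by
      field_simp; ring
    rw [h3, ENNReal.toReal_ofReal (by positivity), inv_inv]
    unfold adicAvg
    congr 1
    refine setIntegral_congr_fun measurableSet_Ico fun y hy => ?_
    have hy' : y ∈ Ico (0:ℝ) 1 := nm_sub N hN n _ (nm_idx_lt N hN n x hxI) hy
    rw [hψ, indicator_of_mem hy']
  · rw [tendsto_nhdsWithin_iff]
    constructor
    · have := (tendsto_pow_atTop_atTop_of_one_lt hN1).inv_tendsto_atTop.const_mul (1/2:ℝ)
      simpa [div_eq_mul_inv] using this
    · refine Eventually.of_forall fun n => ?_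
      rw [mem_Ioi]; positivity
  · refine Eventually.of_forall fun n => ?_
    have hm := (nm_mem N hN n _ x hxI.1).2 rfl
    unfold adicItv at hm
    rw [one_mul, Real.closedBall_eq_Icc, ← sub_div, ← add_div]
    have e1 : ((⌊x * (N:ℝ)^n⌋₊ : ℝ) + 1/2 - 1/2) = (⌊x * (N:ℝ)^n⌋₊ : ℝ) := by ring
    have e2 : ((⌊x * (N:ℝ)^n⌋₊ : ℝ) + 1/2 + 1/2) = (⌊x * (N:ℝ)^n⌋₊ : ℝ) + 1 := by ring
    rw [e1, e2]
    exact ⟨hm.1, hm.2.le⟩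

theorem nm_lower (N : ℕ) (hN : 2 ≤ N) (p f F : ℝ) (hp : 1 < p) (hf : 0 < f) (φ : ℝ → ℝ)
    (h0 : ∀ x ∈ Set.Ico (0:ℝ) 1, 0 ≤ φ x) (hI : IntegrableOn φ (Ico 0 1))
    (hIp : IntegrableOn (fun x => φ x ^ p) (Ico 0 1))
    (hfe : (∫ x in Set.Ico (0:ℝ) 1, φ x) = f) (hFe : (∫ x in Set.Ico (0:ℝ) 1, φ x ^ p) = F) :
    f ^ p + (((N : ℝ) ^ p - 1) / ((N : ℝ) ^ p - N)) * (F - f ^ p) ≤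
      ∫ x in Set.Ico (0:ℝ) 1, adicMax N φ x ^ p := by
  have hN1 : (1:ℝ) < N := by exact_mod_cast (by omega : 1 < N)
  have hN0 : (0:ℝ) < N := by linarith
  have hNp : (N:ℝ) < (N:ℝ)^p := by
    simpa using Real.rpow_lt_rpow_of_exponent_lt hN1 hp
  have hK0 : 0 ≤ (((N : ℝ) ^ p - 1) / ((N : ℝ) ^ p - N)) :=
    div_nonneg (by linarith) (by linarith)
  have hlo := fun a s => nm_real_lo N hN p a s hp
  generalize (((N : ℝ) ^ p - 1) / ((N : ℝ) ^ p - N)) = K at hlo hK0 ⊢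
  have hp1 : 0 < p - 1 := by linarith
  have hhi := fun a s => nm_real_hi p a s hp
  have hc1 : 1 ≤ p / (p-1) := by rw [le_div_iff₀ hp1]; linarith
  generalize p / (p-1) = c at hhi hc1
  have habs : IntegrableOn (fun x => |φ x|) (Ico 0 1) := hI.abs
  obtain ⟨S, hS⟩ : ∃ S : ℕ → ℝ → ℝ, S = fun n x => adicAvg N φ n ⌊x * (N:ℝ)^n⌋₊ := ⟨_, rfl⟩
  obtain ⟨M, hM⟩ : ∃ M : ℕ → ℝ → ℝ, M = fun n x => nmMax N φ n ⌊x * (N:ℝ)^n⌋₊ := ⟨_, rfl⟩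
  have hM0 : ∀ x ∈ Ico (0:ℝ) 1, M 0 x = f := by
    intro x hx
    have : ⌊x * (N:ℝ)^0⌋₊ = 0 := by simpa using nm_idx_lt N hN 0 x hx
    rw [hM]; simp only [this]
    rw [nmMax]
    unfold adicAvg adicItv
    rw [← hfe]
    simp only [pow_zero, one_mul, Nat.cast_zero, zero_add, div_one]
    exact setIntegral_congr_fun measurableSet_Ico fun y hy => abs_of_nonneg (h0 y hy)
  have hMs : ∀ n x, M (n+1) x = max (M n x) (S (n+1) x) := by
    intro n x
    rw [hM, hS]; simp only; rw [nmMax, nm_idx_succ N hN]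
  have hSM : ∀ n x, S n x ≤ M n x := by
    intro n x; rw [hM, hS]; exact nm_avg_le_max _ _ _ _
  have hMmono : ∀ x, Monotone (fun n => M n x) := by
    intro x
    refine monotone_nat_of_le_succ fun n => ?_
    rw [hMs]; exact le_max_left _ _
  have hMf : ∀ n, ∀ x ∈ Ico (0:ℝ) 1, f ≤ M n x := by
    intro n x hx
    rw [← hM0 x hx]; exact hMmono x (Nat.zero_le n)
  have hSN : ∀ n, ∀ x ∈ Ico (0:ℝ) 1, S (n+1) x ≤ N * M n x := by
    intro n x hx
    have h1 := nm_avg_child N hN φ habs n _ (nm_idx_lt N hN (n+1) x hx)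
    rw [nm_idx_succ N hN] at h1
    have h2 := hSM n x
    rw [hS] at h2 ⊢
    simp only at h2 ⊢
    refine h1.trans (by gcongr)
  have iA : ∀ n, IntegrableOn (fun x => M n x ^ p) (Ico 0 1) := by
    intro n; rw [hM]; exact nm_int_one N hN n (fun k => nmMax N φ n k ^ p)
  have iB : ∀ n, IntegrableOn (fun x => M n x ^ (p-1) * |φ x|) (Ico 0 1) := by
    intro n; rw [hM]; exact nm_int_mul N hN n (fun k => nmMax N φ n k ^ (p-1)) _ habs
  have iB1 : ∀ n, IntegrableOn (fun x => M n x ^ (p-1) * S n x) (Ico 0 1) := by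
    intro n; rw [hM, hS]
    exact nm_int_one N hN n (fun k => nmMax N φ n k ^ (p-1) * adicAvg N φ n k)
  have hMlev : ∀ n x, M n x = nmMax N φ n (⌊x * (N:ℝ)^(n+1)⌋₊ / N) := by
    intro n x; rw [hM, nm_idx_succ N hN]
  have iB2 : ∀ n, IntegrableOn (fun x => M n x ^ (p-1) * S (n+1) x) (Ico 0 1) := by
    intro n; simp only [hMlev]; rw [hS]
    exact nm_int_one N hN (n+1) (fun k => nmMax N φ n (k/N) ^ (p-1) * adicAvg N φ (n+1) k)
  have eB1 : ∀ n, ∫ x in Ico (0:ℝ) 1, M n x ^ (p-1) * S n x =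
      ∫ x in Ico (0:ℝ) 1, M n x ^ (p-1) * |φ x| := by
    intro n; rw [hM, hS]
    exact nm_swap N hN n (fun k => nmMax N φ n k ^ (p-1)) φ habs
  have eB2 : ∀ n, ∫ x in Ico (0:ℝ) 1, M n x ^ (p-1) * S (n+1) x =
      ∫ x in Ico (0:ℝ) 1, M n x ^ (p-1) * |φ x| := by
    intro n; simp only [hMlev]; rw [hS]
    exact nm_swap N hN (n+1) (fun k => nmMax N φ n (k/N) ^ (p-1)) φ habs
  obtain ⟨A, hA⟩ : ∃ A : ℕ → ℝ, A = fun n => ∫ x in Ico (0:ℝ) 1, M n x ^ p := ⟨_, rfl⟩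
  obtain ⟨B, hB⟩ : ∃ B : ℕ → ℝ, B = fun n => ∫ x in Ico (0:ℝ) 1, M n x ^ (p-1) * |φ x| := ⟨_, rfl⟩
  have hD1 : ∀ n (d : ℝ), A n - d * B n =
      ∫ x in Ico (0:ℝ) 1, (M n x ^ p - d * (M n x ^ (p-1) * S (n+1) x)) := by
    intro n d
    rw [integral_sub (iA n) ((iB2 n).const_mul d), integral_const_mul, eB2, hA, hB]
  have hD2 : ∀ n (d : ℝ), A n - d * B n =
      ∫ x in Ico (0:ℝ) 1, (M n x ^ p - d * (M n x ^ (p-1) * S n x)) := by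
    intro n d
    rw [integral_sub (iA n) ((iB1 n).const_mul d), integral_const_mul, eB1, hA, hB]
  have hfp : f ^ p = f^(p-1) * f := by rw [Real.rpow_sub_one hf.ne']; field_simp
  have hA0 : A 0 = f ^ p := by
    rw [hA]; simp only
    rw [setIntegral_congr_fun measurableSet_Ico (g := fun _ => f ^ p)
      (fun x hx => by simp only [hM0 x hx])]
    simp
  have hB0 : B 0 = f ^ p := by
    rw [hB]; simp only
    rw [setIntegral_congr_fun measurableSet_Ico (g := fun x => f ^ (p-1) * φ x)
      (fun x hx => by simp only [hM0 x hx, abs_of_nonneg (h0 x hx)])]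
    rw [integral_const_mul, hfe, hfp]
  have hLo : ∀ n, (1 - K) * f ^ p ≤ A n - K * B n := by
    intro n
    induction n with
    | zero => rw [hA0, hB0]; linarith
    | succ n ih =>
      refine ih.trans ?_
      rw [hD1 n, hD2 (n+1)]
      refine setIntegral_mono_on ((iA n).sub ((iB2 n).const_mul K))
        ((iA (n+1)).sub ((iB1 (n+1)).const_mul K)) measurableSet_Ico fun x hx => ?_
      rw [hMs n x]
      exact hlo _ _ (hf.trans_le (hMf n x hx)) (hSN n x hx)
  have hHi : ∀ n, A n - c * B n ≤ (1 - c) * f ^ p := by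
    intro n
    induction n with
    | zero => rw [hA0, hB0]; linarith
    | succ n ih =>
      refine le_trans ?_ ih
      rw [hD1 n, hD2 (n+1)]
      refine setIntegral_mono_on ((iA (n+1)).sub ((iB1 (n+1)).const_mul c))
        ((iA n).sub ((iB2 n).const_mul c)) measurableSet_Ico fun x hx => ?_
      rw [hMs n x]
      exact hhi _ _ (hf.trans_le (hMf n x hx))
  have hpp : ∀ y : ℝ, 0 < y → y ^ p = y^(p-1) * y := by
    intro y hy; rw [Real.rpow_sub_one hy.ne']; field_simp
  -- upper bound
  have hAbd : ∀ n, A n ≤ 2 * (c * (2*c)^(p-1) * F) := by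
    intro n
    have h1 : c * B n ≤ 1/2 * A n + c * (2*c)^(p-1) * F := by
      rw [hA, hB, ← hFe]
      simp only
      rw [← integral_const_mul, ← integral_const_mul, ← integral_const_mul,
        ← integral_add ((iA n).const_mul _) (hIp.const_mul _)]
      refine setIntegral_mono_on ((iB n).const_mul _) (((iA n).const_mul _).add (hIp.const_mul _))
        measurableSet_Ico fun x hx => ?_
      have hm : 0 < M n x := hf.trans_le (hMf n x hx)
      have hφx := h0 x hx
      rw [abs_of_nonneg hφx]
      have hmp : 0 < M n x ^ (p-1) := Real.rpow_pos_of_pos hm _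
      have hφp : 0 ≤ φ x ^ p := Real.rpow_nonneg hφx _
      have hc0 : 0 ≤ c * (2*c)^(p-1) :=
        mul_nonneg (by linarith) (Real.rpow_nonneg (by linarith) _)
      rcases le_total (2 * c * φ x) (M n x) with h | h
      · have : c * (M n x ^ (p-1) * φ x) ≤ 1/2 * M n x ^ p := by
          rw [hpp _ hm]; nlinarith
        have := mul_nonneg hc0 hφp
        linarith
      · have hφpos : 0 < φ x := by
          by_contra hcon
          have : φ x = 0 := le_antisymm (not_lt.1 hcon) hφx
          rw [this] at h; linarith
        have h2 : M n x ^ (p-1) ≤ (2*c)^(p-1) * φ x ^ (p-1) := by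
          rw [← Real.mul_rpow (by linarith) hφx]
          exact Real.rpow_le_rpow hm.le h hp1.le
        have h3 : c * (M n x ^ (p-1) * φ x) ≤ c * (2*c)^(p-1) * φ x ^ p := by
          rw [hpp _ hφpos]
          calc c * (M n x ^ (p-1) * φ x) ≤ c * ((2*c)^(p-1) * φ x ^ (p-1) * φ x) := by gcongr
            _ = _ := by ring
        have : 0 ≤ 1/2 * M n x ^ p := by have := Real.rpow_pos_of_pos hm p; positivity
        linarith
    have h2 := hHi n
    have h3 : (1 - c) * f^p ≤ 0 :=
      mul_nonpos_of_nonpos_of_nonneg (by linarith) (Real.rpow_nonneg hf.le _)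
    linarith
  -- pointwise limits
  have hset : ∀ x ∈ Ico (0:ℝ) 1, {r : ℝ | ∃ m k : ℕ, k < N ^ m ∧ x ∈ adicItv N m k ∧
      r = adicAvg N φ m k} = range (fun n => S n x) := by
    intro x hx
    ext r
    constructor
    · rintro ⟨m, k, hk, hxk, rfl⟩
      refine ⟨m, ?_⟩
      rw [nm_mem N hN m k x hx.1] at hxk
      rw [hS]; simp only [hxk]
    · rintro ⟨m, rfl⟩
      exact ⟨m, _, nm_idx_lt N hN m x hx, (nm_mem N hN m _ x hx.1).2 rfl, by rw [hS]⟩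
  have hae : ∀ᵐ x ∂(volume.restrict (Ico (0:ℝ) 1)), 0 ≤ φ x ∧ φ x ≤ adicMax N φ x ∧
      (∀ n, f ≤ M n x) ∧
      (∀ n, M n x ≤ adicMax N φ x) ∧ Tendsto (fun n => M n x) atTop (nhds (adicMax N φ x)) := by
    filter_upwards [nm_diff N hN φ habs, ae_restrict_mem measurableSet_Ico] with x hx hxI
    have hφx := h0 x hxI
    have hx' : Tendsto (fun n => S n x) atTop (nhds (φ x)) := by
      rw [abs_of_nonneg hφx] at hx; rw [hS]; exact hx
    have hbdd : BddAbove (range (fun n => S n x)) := hx'.bddAbove_range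
    have hmaxe : adicMax N φ x = sSup (range (fun n => S n x)) := by
      unfold adicMax; rw [hset x hxI]
    have hSle : ∀ n, S n x ≤ adicMax N φ x := by
      intro n; rw [hmaxe]; exact le_csSup hbdd ⟨n, rfl⟩
    have hMle : ∀ n, M n x ≤ adicMax N φ x := by
      intro n
      induction n with
      | zero =>
        have := hSle 0
        rw [hS] at this; rw [hM]; exact this
      | succ n ih => rw [hMs]; exact max_le ih (hSle _)
    refine ⟨hφx, le_of_tendsto' hx' hSle, fun n => hMf n x hxI, hMle, ?_⟩
    refine tendsto_atTop_isLUB (hMmono x) ⟨?_, ?_⟩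
    · rintro _ ⟨n, rfl⟩; exact hMle n
    · intro b hb
      rw [hmaxe]
      refine csSup_le (range_nonempty _) ?_
      rintro _ ⟨n, rfl⟩
      exact (hSM n x).trans (hb ⟨n, rfl⟩)
  have htp : ∀ᵐ x ∂(volume.restrict (Ico (0:ℝ) 1)),
      Tendsto (fun n => M n x ^ p) atTop (nhds (adicMax N φ x ^ p)) := by
    filter_upwards [hae] with x hx
    exact hx.2.2.2.2.rpow_const (Or.inr (by linarith))
  have hmeas : AEStronglyMeasurable (fun x => adicMax N φ x ^ p)
      (volume.restrict (Ico (0:ℝ) 1)) :=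
    aestronglyMeasurable_of_tendsto_ae atTop (fun n => (iA n).aestronglyMeasurable) htp
  have hnn : ∀ᵐ x ∂(volume.restrict (Ico (0:ℝ) 1)), 0 ≤ adicMax N φ x ^ p := by
    filter_upwards [hae] with x hx
    exact Real.rpow_nonneg (hx.1.trans hx.2.1) _
  have hMint : IntegrableOn (fun x => adicMax N φ x ^ p) (Ico 0 1) := by
    refine ⟨hmeas, ?_⟩
    rw [hasFiniteIntegral_iff_ofReal hnn]
    have hlim := lintegral_tendsto_of_tendsto_of_monotone
      (μ := volume.restrict (Ico (0:ℝ) 1))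
      (f := fun n x => ENNReal.ofReal (M n x ^ p))
      (F := fun x => ENNReal.ofReal (adicMax N φ x ^ p))
      (fun n => (iA n).aestronglyMeasurable.aemeasurable.ennreal_ofReal)
      (by
        filter_upwards [hae] with x hx
        intro i j hij
        refine ENNReal.ofReal_le_ofReal ?_
        exact Real.rpow_le_rpow (hf.le.trans (hx.2.2.1 i)) (hMmono x hij) (by linarith))
      (by
        filter_upwards [htp] with x hx
        exact (ENNReal.continuous_ofReal.tendsto _).comp hx)
    refine lt_of_le_of_lt (le_of_tendsto' hlim (b := ENNReal.ofReal (2 * (c * (2*c)^(p-1) * F)))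
      fun n => ?_) ENNReal.ofReal_lt_top
    rw [← ofReal_integral_eq_lintegral_ofReal (iA n)]
    · refine ENNReal.ofReal_le_ofReal ?_
      have := hAbd n
      rw [hA] at this; exact this
    · filter_upwards [hae] with x hx
      exact Real.rpow_nonneg (hf.le.trans (hx.2.2.1 n)) _
  have hAle : ∀ n, A n ≤ ∫ x in Set.Ico (0:ℝ) 1, adicMax N φ x ^ p := by
    intro n
    rw [hA]
    refine integral_mono_ae (iA n) hMint ?_
    filter_upwards [hae] with x hx
    exact Real.rpow_le_rpow (hf.le.trans (hx.2.2.1 n)) (hx.2.2.2.1 n) (by linarith)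
  have hBlim : Tendsto B atTop (nhds (∫ x in Set.Ico (0:ℝ) 1, adicMax N φ x ^ (p-1) * |φ x|)) := by
    rw [hB]
    refine tendsto_integral_of_dominated_convergence (fun x => adicMax N φ x ^ p)
      (fun n => (iB n).aestronglyMeasurable) hMint (fun n => ?_) ?_
    · filter_upwards [hae] with x hx
      have hm : 0 < M n x := hf.trans_le (hx.2.2.1 n)
      have hm2 : 0 < adicMax N φ x := hm.trans_le (hx.2.2.2.1 n)
      have hmp := Real.rpow_pos_of_pos hm (p-1)
      have hmp2 := Real.rpow_pos_of_pos hm2 (p-1)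
      rw [Real.norm_eq_abs, abs_mul, abs_abs, abs_of_pos hmp, abs_of_nonneg hx.1, hpp _ hm2]
      have := Real.rpow_le_rpow hm.le (hx.2.2.2.1 n) hp1.le
      exact mul_le_mul this hx.2.1 hx.1 hmp2.le
    · filter_upwards [hae] with x hx
      exact (hx.2.2.2.2.rpow_const (Or.inr hp1.le)).mul_const _
  have iL : IntegrableOn (fun x => adicMax N φ x ^ (p-1) * |φ x|) (Ico 0 1) := by
    refine Integrable.mono' hMint (aestronglyMeasurable_of_tendsto_ae atTop
      (f := fun n x => M n x ^ (p-1) * |φ x|) (fun n => (iB n).aestronglyMeasurable) ?_) ?_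
    · filter_upwards [hae] with x hx
      exact (hx.2.2.2.2.rpow_const (Or.inr hp1.le)).mul_const _
    · filter_upwards [hae] with x hx
      have hm2 : 0 < adicMax N φ x := (hf.trans_le (hx.2.2.1 0)).trans_le (hx.2.2.2.1 0)
      have hmp2 := Real.rpow_pos_of_pos hm2 (p-1)
      rw [Real.norm_eq_abs, abs_mul, abs_abs, abs_of_pos hmp2, abs_of_nonneg hx.1, hpp _ hm2]
      exact mul_le_mul_of_nonneg_left hx.2.1 hmp2.le
  have hFle : F ≤ ∫ x in Set.Ico (0:ℝ) 1, adicMax N φ x ^ (p-1) * |φ x| := by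
    rw [← hFe]
    refine integral_mono_ae hIp iL ?_
    filter_upwards [hae] with x hx
    rw [abs_of_nonneg hx.1]
    rcases hx.1.eq_or_lt with h | h
    · rw [← h, Real.zero_rpow (by linarith), mul_zero]
    · rw [hpp _ h]
      exact mul_le_mul_of_nonneg_right (Real.rpow_le_rpow hx.1 hx.2.1 hp1.le) hx.1
  have hfin : (1 - K) * f ^ p + K * (∫ x in Set.Ico (0:ℝ) 1, adicMax N φ x ^ (p-1) * |φ x|) ≤
      ∫ x in Set.Ico (0:ℝ) 1, adicMax N φ x ^ p := by
    refine le_of_tendsto' ((hBlim.const_mul K).const_add _) fun n => ?_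
    have h1 := hLo n
    have h2 := hAle n
    linarith
  nlinarith [mul_le_mul_of_nonneg_left hFle hK0]

theorem stmt0 (N : ℕ) (hN : 2 ≤ N) (p f F : ℝ) (hp : 1 < p)
    (hf : 0 < f) (hF : 0 < F) (hfF : f ^ p ≤ F) :
    sInf {y : ℝ | ∃ φ : ℝ → ℝ, Measurable φ ∧ (∀ x ∈ Set.Ico (0:ℝ) 1, 0 ≤ φ x) ∧
        (∫ x in Set.Ico (0:ℝ) 1, φ x) = f ∧ (∫ x in Set.Ico (0:ℝ) 1, φ x ^ p) = F ∧
        y = ∫ x in Set.Ico (0:ℝ) 1, adicMax N φ x ^ p} =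
      f ^ p + (((N : ℝ) ^ p - 1) / ((N : ℝ) ^ p - N)) * (F - f ^ p) := by
  refine IsLeast.csInf_eq ⟨nm_attain N hN p f F hp hf hfF, ?_⟩
  rintro y ⟨φ, _, h0, hfe, hFe, rfl⟩
  refine nm_lower N hN p f F hp hf φ h0 ?_ ?_ hfe hFe
  · by_contra h
    rw [integral_undef h] at hfe
    linarith
  · by_contra h
    rw [integral_undef h] at hFe
    linarith
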